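/- Let M be a symmetric matrix with entries in {0,1,*}, indexed by a finite set D. Suppose that for every set W of two-element subsets of D, at least one of the following holds: (1) there exist S, T ∈ W (not necessarily distinct) such that M|_{S×T} is not pure; (2) W = {S, T} with S ∩ T = ∅ and M|_{S×T} is pure and *-rectangular; (3) M|_{⋃W} is pure and has no derectangularising sequence (using subsets of ⋃W), where ⋃W is the union of the sets in W. Then M has no derectangularising sequence. -/

import Mathlib

/-- The three possible entries `0`, `1`, `*` of a matrix-partition matrix. -/
inductive Entry : Type
  | zero | one | star
deriving DecidableEq

/-- `hrel M X Y` is the relation `H^M_{X,Y} = {(i,j) ∈ X × Y : M i j = *}`. -/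
def hrel {D : Type} (M : D → D → Entry) (X Y : Set D) : Set (D × D) :=
  {p | p.1 ∈ X ∧ p.2 ∈ Y ∧ M p.1 p.2 = Entry.star}

/-- Composition of relations: `R ∘ S = {(x,z) : ∃ y, (x,y) ∈ R ∧ (y,z) ∈ S}`. -/
def relComp {D : Type} (R S : Set (D × D)) : Set (D × D) :=
  {p | ∃ y, (p.1, y) ∈ R ∧ (y, p.2) ∈ S}

/-- A relation `R ⊆ A × B` is rectangular if `(i,i'),(i,j'),(j,i') ∈ R ⟹ (j,j') ∈ R`. -/
def Rectangular {A B : Type} (R : Set (A × B)) : Prop :=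
  ∀ i j i' j', (i, i') ∈ R → (i, j') ∈ R → (j, i') ∈ R → (j, j') ∈ R

/-- The submatrix `M|_{X×Y}` is pure if it contains no `0` or contains no `1`. -/
def IsPure {D : Type} (M : D → D → Entry) (X Y : Set D) : Prop :=
  (∀ i ∈ X, ∀ j ∈ Y, M i j ≠ Entry.zero) ∨ (∀ i ∈ X, ∀ j ∈ Y, M i j ≠ Entry.one)

/-- The composed relation `H^M_{D₁,D₂} ∘ H^M_{D₂,D₃} ∘ ⋯ ∘ H^M_{D_{k−1},D_k}`
of a sequence of subsets of `D`. -/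
def relChain {D : Type} (M : D → D → Entry) : List (Set D) → Set (D × D)
  | [] => ∅
  | [X] => {p | p.1 = p.2 ∧ p.1 ∈ X}
  | X :: Y :: rest => relComp (hrel M X Y) (relChain M (Y :: rest))

/-- `L = D₁, …, D_k` is a derectangularising sequence of `M`: `k ≥ 2`, every
`M|_{D_i × D_j}` is pure, and the composed relation is not rectangular. -/
def IsDerect {D : Type} (M : D → D → Entry) (L : List (Set D)) : Prop :=
  2 ≤ L.length ∧ (∀ X ∈ L, ∀ Y ∈ L, IsPure M X Y) ∧ ¬ Rectangular (relChain M L)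

/-!
A derectangularising sequence `L` cannot contain a set with at most one element: the composed
relation would then be a product of two sets. So every member of `L` is a union of pairs, and
the hypothesis is applied to the family `W` of all pairs inside members of `L`. Purity of `L`
passes to `W`, and since `⋃₀ W` contains all members of `L`, the sequence `L` itself is one on
`⋃₀ W`, so neither (1) nor (3) holds. There remains the case `W = {S, T}`. As a set with three
elements has three pairs, every member of `L` is then `S` or `T`. Each of the relations `H^M`
between `S` and `T` is rectangular (for `H^M_{S,S}`, apply the hypothesis to `{S}`), and
rectangularity survives composition through a set with at most two elements.
-/

variable {D : Type} {M : D → D → Entry} {L : List (Set D)}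

theorem encard_le_two_iff {α : Type*} {s : Set α} :
    s.encard ≤ 2 ↔ ∀ a ∈ s, ∀ b ∈ s, ∀ c ∈ s, a = b ∨ a = c ∨ b = c := by
  constructor
  · intro hs a ha b hb c hc
    by_contra! ⟨hab, hac, hbc⟩
    have h3 : ({a, b, c} : Set α).encard = 3 :=
      Set.encard_eq_three.2 ⟨a, b, c, hab, hac, hbc, rfl⟩
    have hle : ({a, b, c} : Set α).encard ≤ 2 :=
      (Set.encard_le_encard (by grind)).trans hs
    exact absurd (h3 ▸ hle) (by decide)
  · intro h
    by_contra! hs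
    have h3 : 3 ≤ s.encard := Order.add_one_le_of_lt hs
    obtain ⟨t, hts, ht⟩ := Set.exists_subset_encard_eq h3
    obtain ⟨a, b, c, hab, hac, hbc, rfl⟩ := Set.encard_eq_three.1 ht
    obtain ⟨ha, hb, hc⟩ : a ∈ s ∧ b ∈ s ∧ c ∈ s := by
      simpa only [Set.insert_subset_iff, Set.singleton_subset_iff] using hts
    exact (h a ha b hb c hc).elim hab fun h' => h'.elim hac hbc

theorem Rectangular.preimage_swap {A B : Type} {R : Set (A × B)} (hR : Rectangular R) :
    Rectangular (Prod.swap ⁻¹' R) :=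
  fun _ _ _ _ h₁ h₂ h₃ => hR _ _ _ _ h₁ h₃ h₂

theorem Rectangular.relComp {R S : Set (D × D)} {Y : Set D} (hR : Rectangular R)
    (hS : Rectangular S) (hY : Y.encard ≤ 2) (hRY : ∀ p ∈ R, p.2 ∈ Y) :
    Rectangular (relComp R S) := by
  rintro i j i' j' ⟨y₁, hi₁, hi'₁⟩ ⟨y₂, hi₂, hj'₂⟩ ⟨y₃, hj₃, hi'₃⟩
  rcases encard_le_two_iff.1 hY _ (hRY _ hi₁) _ (hRY _ hi₂) _ (hRY _ hj₃) with rfl | rfl | rfl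
  · exact ⟨y₃, hj₃, hS _ _ _ _ hi'₁ hj'₂ hi'₃⟩
  · exact ⟨y₂, hR _ _ _ _ hi₁ hi₂ hj₃, hj'₂⟩
  · exact ⟨y₂, hj₃, hj'₂⟩

theorem hrel_eq_preimage_swap (hsym : ∀ i j, M i j = M j i) (X Y : Set D) :
    hrel M X Y = Prod.swap ⁻¹' hrel M Y X := by
  ext ⟨i, j⟩
  simp only [hrel, Set.mem_preimage, Set.mem_ofPred_eq, Prod.swap_prod_mk, hsym i j, and_left_comm]

theorem relChain_pair (X Y : Set D) : relChain M [X, Y] = hrel M X Y := by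
  ext ⟨i, j⟩
  constructor
  · rintro ⟨y, hiy, hyj : y = j, -⟩
    exact hyj ▸ hiy
  · intro hij
    exact ⟨j, hij, rfl, hij.2.1⟩

theorem fst_mem_of_mem_relChain_cons {X : Set D} {p : D × D} (hp : p ∈ relChain M (X :: L)) :
    p.1 ∈ X := by
  cases L with
  | nil => exact hp.2
  | cons Y L =>
    obtain ⟨_, hXY, -⟩ := hp
    exact hXY.1

theorem mk_mem_relChain_of_subsingleton {X : Set D} (hXL : X ∈ L) (hX : X.Subsingleton)
    {i i' j j' : D} (hi : (i, i') ∈ relChain M L) (hj : (j, j') ∈ relChain M L) :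
    (i, j') ∈ relChain M L := by
  induction L generalizing i j with
  | nil => exact hi.elim
  | cons Y L ih =>
    rcases List.mem_cons.1 hXL with rfl | hXL
    · obtain rfl : i = j :=
        hX (fst_mem_of_mem_relChain_cons hi) (fst_mem_of_mem_relChain_cons hj)
      exact hj
    · obtain ⟨Z, L, rfl⟩ := List.exists_cons_of_ne_nil (List.ne_nil_of_mem hXL)
      obtain ⟨y, hiy, hy⟩ := hi
      obtain ⟨_, -, hz⟩ := hj
      exact ⟨y, hiy, ih hXL hy hz⟩

theorem rectangular_relChain_of_subsingleton {X : Set D} (hXL : X ∈ L) (hX : X.Subsingleton) :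
    Rectangular (relChain M L) :=
  fun _ _ _ _ _ h₂ h₃ => mk_mem_relChain_of_subsingleton hXL hX h₃ h₂

theorem rectangular_relChain (hcard : ∀ X ∈ L, X.encard ≤ 2)
    (hrect : L.IsChain fun X Y => Rectangular (hrel M X Y)) : Rectangular (relChain M L) := by
  induction L with
  | nil => exact fun _ _ _ _ h => h.elim
  | cons X L ih =>
    cases L with
    | nil =>
      rintro i j i' j' ⟨hii' : i = i', -⟩ ⟨hij' : i = j', -⟩ hj
      exact hij' ▸ hii' ▸ hj
    | cons Y L =>
      obtain ⟨hXY, hrect⟩ := List.isChain_cons_cons.1 hrect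
      rw [List.forall_mem_cons] at hcard
      exact hXY.relComp (ih hcard.2 hrect) (hcard.2 Y List.mem_cons_self) fun _ hp => hp.2.1

theorem IsPure.mono {X X' Y Y' : Set D} (h : IsPure M X Y) (hX : X' ⊆ X) (hY : Y' ⊆ Y) :
    IsPure M X' Y' :=
  h.imp (fun h i hi j hj => h i (hX hi) j (hY hj)) (fun h i hi j hj => h i (hX hi) j (hY hj))

theorem IsPure.isDerect_pair_self {X : Set D} (hX : IsPure M X X)
    (hrect : ¬ Rectangular (hrel M X X)) : IsDerect M [X, X] := by
  refine ⟨le_rfl, ?_, by rwa [relChain_pair]⟩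
  simpa using hX

theorem IsDerect.nontrivial (hL : IsDerect M L) {X : Set D} (hX : X ∈ L) : X.Nontrivial :=
  Set.not_subsingleton_iff.1 fun h => hL.2.2 (rectangular_relChain_of_subsingleton hX h)

/-- The family of all two-element subsets of the members of the sequence `L`; it is the `W` to
which the hypothesis on families of pairs is applied. -/
def pairsWithin (L : List (Set D)) : Set (Set D) :=
  {S | S.ncard = 2 ∧ ∃ X ∈ L, S ⊆ X}

theorem pair_mem_pairsWithin {X : Set D} (hX : X ∈ L) {a b : D} (ha : a ∈ X) (hb : b ∈ X)
    (hab : a ≠ b) : {a, b} ∈ pairsWithin L :=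
  ⟨Set.ncard_pair hab, X, hX, Set.pair_subset ha hb⟩

theorem subset_sUnion_pairsWithin {X : Set D} (hX : X ∈ L) (hnt : X.Nontrivial) :
    X ⊆ ⋃₀ pairsWithin L := by
  intro x hx
  obtain ⟨y, hy, hyx⟩ := hnt.exists_ne x
  exact ⟨{x, y}, pair_mem_pairsWithin hX hx hy hyx.symm, Set.mem_insert x {y}⟩

theorem isPure_of_mem_pairsWithin (hpure : ∀ X ∈ L, ∀ Y ∈ L, IsPure M X Y) {S T : Set D}
    (hS : S ∈ pairsWithin L) (hT : T ∈ pairsWithin L) : IsPure M S T := by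
  obtain ⟨-, X, hX, hSX⟩ := hS
  obtain ⟨-, Y, hY, hTY⟩ := hT
  exact (hpure X hX Y hY).mono hSX hTY

theorem encard_le_two_of_encard_pairsWithin_le_two (hW : (pairsWithin L).encard ≤ 2)
    {X : Set D} (hX : X ∈ L) : X.encard ≤ 2 := by
  refine encard_le_two_iff.2 fun a ha b hb c hc => ?_
  by_contra! ⟨hab, hac, hbc⟩
  have h₁ : {a, b} ∈ pairsWithin L := pair_mem_pairsWithin hX ha hb hab
  have h₂ : {a, c} ∈ pairsWithin L := pair_mem_pairsWithin hX ha hc hac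
  have h₃ : {b, c} ∈ pairsWithin L := pair_mem_pairsWithin hX hb hc hbc
  rcases encard_le_two_iff.1 hW _ h₁ _ h₂ _ h₃ with h | h | h <;>
    grind [Set.pair_eq_pair_iff]

theorem mem_pairsWithin_of_encard_le_two {X : Set D} (hX : X ∈ L) (hnt : X.Nontrivial)
    (hcard : X.encard ≤ 2) : X ∈ pairsWithin L := by
  have h2 : X.encard = 2 :=
    hcard.antisymm (Order.add_one_le_of_lt (Set.one_lt_encard_iff_nontrivial.2 hnt))
  exact ⟨by rw [Set.ncard_def, h2]; rfl, X, hX, subset_rfl⟩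

theorem rectangular_relChain_of_pairsWithin_eq_pair (hsym : ∀ i j, M i j = M j i)
    (hnt : ∀ X ∈ L, X.Nontrivial) {S T : Set D} (hW : pairsWithin L = {S, T})
    (hself : ∀ X ∈ pairsWithin L, Rectangular (hrel M X X)) (hST : Rectangular (hrel M S T)) :
    Rectangular (relChain M L) := by
  have hfew : (pairsWithin L).encard ≤ 2 := by
    rw [hW]
    exact encard_le_two_iff.2 (by grind)
  have hcard : ∀ X ∈ L, X.encard ≤ 2 := fun X hX =>
    encard_le_two_of_encard_pairsWithin_le_two hfew hX
  have hmem : ∀ X ∈ L, X ∈ ({S, T} : Set (Set D)) := fun X hX =>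
    hW ▸ mem_pairsWithin_of_encard_le_two hX (hnt X hX) (hcard X hX)
  have hTS : Rectangular (hrel M T S) := hrel_eq_preimage_swap hsym T S ▸ hST.preimage_swap
  rw [hW] at hself
  refine rectangular_relChain hcard (List.Pairwise.isChain ?_)
  refine List.pairwise_of_forall_mem_list fun X hX Y hY => ?_
  rcases hmem X hX with rfl | rfl <;> rcases hmem Y hY with rfl | rfl
  · exact hself _ (hmem _ hX)
  · exact hST
  · exact hTS
  · exact hself _ (hmem _ hX)

theorem stmt5_general {D : Type} (M : D → D → Entry)
    (hsym : ∀ i j, M i j = M j i)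
    (hcond : ∀ W : Set (Set D), (∀ S ∈ W, S.ncard = 2) →
      ((∃ S ∈ W, ∃ T ∈ W, ¬ IsPure M S T) ∨
       (∃ S T : Set D, W = {S, T} ∧ Rectangular (hrel M S T)) ∨
       ¬ ∃ L : List (Set D), (∀ X ∈ L, X ⊆ ⋃₀ W) ∧ IsDerect M L)) :
    ¬ ∃ L : List (Set D), IsDerect M L := by
  rintro ⟨L, hL⟩
  have hpure : ∀ S ∈ pairsWithin L, ∀ T ∈ pairsWithin L, IsPure M S T := fun S hS T hT =>
    isPure_of_mem_pairsWithin hL.2.1 hS hT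
  have hself : ∀ X ∈ pairsWithin L, Rectangular (hrel M X X) := by
    intro X hX
    by_contra hrect
    rcases hcond {X} (by rintro S rfl; exact hX.1) with ⟨S, rfl, T, rfl, h⟩ | ⟨S, T, hW, hST⟩ | h
    · exact h (hpure _ hX _ hX)
    · obtain ⟨rfl, rfl⟩ : S = X ∧ T = X := Set.pair_subset_iff.1 hW.ge
      exact hrect hST
    · exact h ⟨[X, X], by simp, (hpure X hX X hX).isDerect_pair_self hrect⟩
  rcases hcond (pairsWithin L) fun S hS => hS.1 with ⟨S, hS, T, hT, h⟩ | ⟨S, T, hW, hST⟩ | h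
  · exact h (hpure S hS T hT)
  · exact hL.2.2 (rectangular_relChain_of_pairsWithin_eq_pair hsym (fun X => hL.nontrivial) hW
      hself hST)
  · exact h ⟨L, fun X hX => subset_sUnion_pairsWithin hX (hL.nontrivial hX), hL⟩

/-- Lemma (tractability criterion): if for every set `W` of two-element subsets of `D`
one of the three properties holds, then `M` has no derectangularising sequence. -/
theorem stmt5 {D : Type} [Fintype D] (M : D → D → Entry)
    (hsym : ∀ i j, M i j = M j i)
    (hcond : ∀ W : Set (Set D), (∀ S ∈ W, S.ncard = 2) →
      ((∃ S ∈ W, ∃ T ∈ W, ¬ IsPure M S T) ∨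
       (∃ S T : Set D, W = {S, T} ∧ S ∩ T = ∅ ∧ IsPure M S T ∧
         Rectangular (hrel M S T)) ∨
       (IsPure M (⋃₀ W) (⋃₀ W) ∧
         ¬ ∃ L : List (Set D), (∀ X ∈ L, X ⊆ ⋃₀ W) ∧ IsDerect M L))) :
    ¬ ∃ L : List (Set D), IsDerect M L :=
  stmt5_general M hsym fun W hW => (hcond W hW).imp_right
    (Or.imp (fun ⟨S, T, hST, _, _, hrect⟩ => ⟨S, T, hST, hrect⟩) And.right)
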